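/- For q ≥ 2, the vectors {v^[adj]_τ : τ ∈ σ_q} are orthonormal, i.e. ⟨v^[adj]_τ, v^[adj]_{τ′}⟩ = δ_{τ,τ′}, and likewise the vectors {v^{adj}_τ : τ ∈ σ_q} are orthonormal. In particular dim V_[adj] = dim V_{adj} = d² − 1. -/

import Mathlib

open Matrix MeasureTheory
open scoped Kronecker

noncomputable section

namespace CliffordPaper

/-- The single-qubit Pauli matrices `1, X, Y, Z`. -/
def pauli1 : Fin 4 → Matrix (Fin 2) (Fin 2) ℂ :=
  ![1, !![0, 1; 1, 0], !![0, -Complex.I; Complex.I, 0], !![1, 0; 0, -1]]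

/-- Index type for the computational basis of `q` qubits. -/
abbrev Idx (q : ℕ) := Fin q → Fin 2

/-- The space `M_d` of `d × d` complex matrices, `d = 2^q`. -/
abbrev Mat (q : ℕ) := Matrix (Idx q) (Idx q) ℂ

/-- The space `M_d ⊗ M_d`, realized as matrices indexed by the product index set
(the tensor factors combine via the Kronecker product `⊗ₖ`). -/
abbrev BMat (q : ℕ) := Matrix (Idx q × Idx q) (Idx q × Idx q) ℂ

/-- The `q`-fold Kronecker product of single-qubit Paulis with labels `a`. -/
def PauliOp {q : ℕ} (a : Fin q → Fin 4) : Mat q :=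
  Matrix.of fun x y => ∏ i, pauli1 (a i) (x i) (y i)

/-- `√d` as a complex number, where `d = 2^q`. -/
def sqrtd (q : ℕ) : ℂ := (Real.sqrt (2 ^ q) : ℝ)

/-- The set `σ̂_q` of normalized Pauli operators. -/
def sigmaHat (q : ℕ) : Set (Mat q) :=
  {M | ∃ a : Fin q → Fin 4, M = (sqrtd q)⁻¹ • PauliOp a}

/-- The normalized identity `σ₀ = 1/√d`. -/
def sigma0 (q : ℕ) : Mat q := (sqrtd q)⁻¹ • (1 : Mat q)

/-- `σ_q = σ̂_q \ {σ₀}`. -/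
def sigmaSet (q : ℕ) : Set (Mat q) := sigmaHat q \ {sigma0 q}

/-- `N_τ`: the normalized nonidentity Paulis anticommuting with `τ`. -/
def NSet {q : ℕ} (τ : Mat q) : Set (Mat q) :=
  {σ | σ ∈ sigmaSet q ∧ σ * τ + τ * σ = 0}

/-- `C_τ`: the normalized nonidentity Paulis distinct from `τ` commuting with `τ`. -/
def CSet {q : ℕ} (τ : Mat q) : Set (Mat q) :=
  {σ | σ ∈ sigmaSet q ∧ σ ≠ τ ∧ σ * τ = τ * σ}

/-- `Ĉ_τ`: the normalized Paulis commuting with `τ`. -/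
def CHatSet {q : ℕ} (τ : Mat q) : Set (Mat q) :=
  {σ | σ ∈ sigmaHat q ∧ σ * τ = τ * σ}

/-- The normalized product `σ·τ = √d στ`. -/
def nprod {q : ℕ} (σ τ : Mat q) : Mat q := sqrtd q • (σ * τ)

/-- The Clifford normalizer `𝒩_q`: unitaries mapping normalized Paulis to
signed normalized Paulis under conjugation. -/
def Cliff (q : ℕ) : Set (Mat q) :=
  {U | U ∈ Matrix.unitaryGroup (Idx q) ℂ ∧
    ∀ σ ∈ sigmaHat q, ∃ τ ∈ sigmaHat q, U * σ * Uᴴ = τ ∨ U * σ * Uᴴ = -τ}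

/-- The two-copy representation `φ⊗²(U) : A ⊗ B ↦ (UAU†) ⊗ (UBU†)`, extended linearly. -/
def twoCopy {q : ℕ} (U : Mat q) : BMat q →ₗ[ℂ] BMat q where
  toFun M := (U ⊗ₖ U) * M * (U ⊗ₖ U)ᴴ
  map_add' M N := by
    show (U ⊗ₖ U) * (M + N) * (U ⊗ₖ U)ᴴ = (U ⊗ₖ U) * M * (U ⊗ₖ U)ᴴ + (U ⊗ₖ U) * N * (U ⊗ₖ U)ᴴ
    rw [Matrix.mul_add, Matrix.add_mul]
  map_smul' c M := by
    show (U ⊗ₖ U) * (c • M) * (U ⊗ₖ U)ᴴ = c • ((U ⊗ₖ U) * M * (U ⊗ₖ U)ᴴ)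
    rw [Matrix.mul_smul, Matrix.smul_mul]

/-- The Hilbert–Schmidt inner product `⟨A, B⟩ = tr(A† B)`. -/
def hs {q : ℕ} (A B : BMat q) : ℂ := (Aᴴ * B).trace

/-- A subspace is invariant under the two-copy representation of `𝒩_q`. -/
def IsInvariant (q : ℕ) (W : Submodule ℂ (BMat q)) : Prop :=
  ∀ U ∈ Cliff q, ∀ v ∈ W, twoCopy U v ∈ W

/-- A nonzero invariant subspace carries an irreducible subrepresentation. -/
def CarriesIrred (q : ℕ) (W : Submodule ℂ (BMat q)) : Prop :=
  W ≠ ⊥ ∧ IsInvariant q W ∧ ∀ W' ≤ W, IsInvariant q W' → W' = ⊥ ∨ W' = W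

/-- Two invariant subspaces carry equivalent subrepresentations: there is a linear
isomorphism between them intertwining the two-copy representation. -/
def EquivRep (q : ℕ) (W W' : Submodule ℂ (BMat q)) : Prop :=
  ∃ T : BMat q →ₗ[ℂ] BMat q, Submodule.map T W = W' ∧
    (∀ x ∈ W, T x = 0 → x = 0) ∧
    ∀ U ∈ Cliff q, ∀ x ∈ W, T (twoCopy U x) = twoCopy U (T x)

/-- `S_{σ,τ} = (σ⊗τ + τ⊗σ)/√2`. -/
def SVec {q : ℕ} (σ τ : Mat q) : BMat q :=
  ((Real.sqrt 2 : ℂ))⁻¹ • (σ ⊗ₖ τ + τ ⊗ₖ σ)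

/-- `A_{σ,τ} = (σ⊗τ − τ⊗σ)/√2`. -/
def AVec {q : ℕ} (σ τ : Mat q) : BMat q :=
  ((Real.sqrt 2 : ℂ))⁻¹ • (σ ⊗ₖ τ - τ ⊗ₖ σ)

/-- The trivial sector `V_id`. -/
def Vid (q : ℕ) : Submodule ℂ (BMat q) :=
  Submodule.span ℂ {sigma0 q ⊗ₖ sigma0 q}

/-- The right adjoint sector `V_r`. -/
def Vr (q : ℕ) : Submodule ℂ (BMat q) :=
  Submodule.span ℂ {M | ∃ τ ∈ sigmaSet q, M = sigma0 q ⊗ₖ τ}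

/-- The left adjoint sector `V_l`. -/
def Vl (q : ℕ) : Submodule ℂ (BMat q) :=
  Submodule.span ℂ {M | ∃ τ ∈ sigmaSet q, M = τ ⊗ₖ sigma0 q}

/-- The diagonal sector `V_d`. -/
def Vdiag (q : ℕ) : Submodule ℂ (BMat q) :=
  Submodule.span ℂ {M | ∃ τ ∈ sigmaSet q, M = τ ⊗ₖ τ}

/-- The symmetric commuting sector `V_[S]`. -/
def VScom (q : ℕ) : Submodule ℂ (BMat q) :=
  Submodule.span ℂ {M | ∃ τ ∈ sigmaSet q, ∃ σ ∈ CSet τ, M = SVec σ τ}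

/-- The symmetric anti-commuting sector `V_{S}`. -/
def VSanti (q : ℕ) : Submodule ℂ (BMat q) :=
  Submodule.span ℂ {M | ∃ τ ∈ sigmaSet q, ∃ σ ∈ NSet τ, M = SVec σ τ}

/-- The antisymmetric commuting sector `V_[A]`. -/
def VAcom (q : ℕ) : Submodule ℂ (BMat q) :=
  Submodule.span ℂ {M | ∃ τ ∈ sigmaSet q, ∃ σ ∈ CSet τ, M = AVec σ τ}

/-- The antisymmetric anti-commuting sector `V_{A}`. -/
def VAanti (q : ℕ) : Submodule ℂ (BMat q) :=
  Submodule.span ℂ {M | ∃ τ ∈ sigmaSet q, ∃ σ ∈ NSet τ, M = AVec σ τ}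

/-- `V_[A]` presented with the spanning vectors `A_{σ,σ·τ}`, `σ ∈ C_τ`. -/
def VAcom' (q : ℕ) : Submodule ℂ (BMat q) :=
  Submodule.span ℂ {M | ∃ τ ∈ sigmaSet q, ∃ σ ∈ CSet τ, M = AVec σ (nprod σ τ)}

/-- `V_0 = span{Σ_{σ∈σ_q} σ⊗σ}`. -/
def V0diag (q : ℕ) : Submodule ℂ (BMat q) :=
  Submodule.span ℂ {∑ᶠ σ ∈ sigmaSet q, σ ⊗ₖ σ}

/-- `V_1`, the "positive" part of the diagonal sector. -/
def V1diag (q : ℕ) : Submodule ℂ (BMat q) :=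
  Submodule.span ℂ {v | ∃ lam : Mat q → ℂ,
    v = ∑ᶠ σ ∈ sigmaSet q, lam σ • (σ ⊗ₖ σ) ∧
    (∑ᶠ σ ∈ sigmaSet q, lam σ) = 0 ∧
    ∀ τ ∈ sigmaSet q, (∑ᶠ σ ∈ NSet τ, lam σ) = -((2 ^ q : ℂ) / 2) * lam τ}

/-- `V_2`, the "negative" part of the diagonal sector. -/
def V2diag (q : ℕ) : Submodule ℂ (BMat q) :=
  Submodule.span ℂ {v | ∃ lam : Mat q → ℂ,
    v = ∑ᶠ σ ∈ sigmaSet q, lam σ • (σ ⊗ₖ σ) ∧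
    (∑ᶠ σ ∈ sigmaSet q, lam σ) = 0 ∧
    ∀ τ ∈ sigmaSet q, (∑ᶠ σ ∈ NSet τ, lam σ) = ((2 ^ q : ℂ) / 2) * lam τ}

/-- `v^[adj]_τ = (2|C_τ|)^{-1/2} Σ_{σ∈C_τ} S_{σ,σ·τ}`. -/
def vadjS {q : ℕ} (τ : Mat q) : BMat q :=
  ((Real.sqrt (2 * ((CSet τ).ncard : ℝ)) : ℂ))⁻¹ • ∑ᶠ σ ∈ CSet τ, SVec σ (nprod σ τ)

/-- `v^{adj}_τ = (2|N_τ|)^{-1/2} Σ_{σ∈N_τ} A_{σ,iσ·τ}`. -/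
def vadjA {q : ℕ} (τ : Mat q) : BMat q :=
  ((Real.sqrt (2 * ((NSet τ).ncard : ℝ)) : ℂ))⁻¹ •
    ∑ᶠ σ ∈ NSet τ, AVec σ (Complex.I • nprod σ τ)

/-- The symmetric adjoint sector `V_[adj]`. -/
def VadjS (q : ℕ) : Submodule ℂ (BMat q) :=
  Submodule.span ℂ {M | ∃ τ ∈ sigmaSet q, M = vadjS τ}

/-- The antisymmetric adjoint sector `V_{adj}`. -/
def VadjA (q : ℕ) : Submodule ℂ (BMat q) :=
  Submodule.span ℂ {M | ∃ τ ∈ sigmaSet q, M = vadjA τ}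

/-- The orthogonal complement `V^⊥_{adj}` of `V_{adj}` inside `V_{A}`. -/
def VadjAperp (q : ℕ) : Submodule ℂ (BMat q) :=
  Submodule.span ℂ {v | v ∈ VAanti q ∧ ∀ w ∈ VadjA q, hs w v = 0}

/-- `V_{1}^τ`. -/
def V1symτ (q : ℕ) (τ : Mat q) : Submodule ℂ (BMat q) :=
  Submodule.span ℂ {v | ∃ lam : Mat q → ℂ,
    v = ∑ᶠ σ ∈ NSet τ, lam σ • SVec σ (Complex.I • nprod σ τ) ∧
    ∀ ν ∈ NSet τ, (∑ᶠ σ ∈ NSet τ ∩ CSet ν, lam σ) - (∑ᶠ σ ∈ NSet τ ∩ NSet ν, lam σ)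
      = ((2 ^ q : ℂ) / 2) * lam ν}

/-- `V_{2}^τ`. -/
def V2symτ (q : ℕ) (τ : Mat q) : Submodule ℂ (BMat q) :=
  Submodule.span ℂ {v | ∃ lam : Mat q → ℂ,
    v = ∑ᶠ σ ∈ NSet τ, lam σ • SVec σ (Complex.I • nprod σ τ) ∧
    ∀ ν ∈ NSet τ, (∑ᶠ σ ∈ NSet τ ∩ CSet ν, lam σ) - (∑ᶠ σ ∈ NSet τ ∩ NSet ν, lam σ)
      = -((2 ^ q : ℂ) / 2) * lam ν}

/-- `V_{1} = ⊕_τ V_{1}^τ`. -/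
def V1sym (q : ℕ) : Submodule ℂ (BMat q) := ⨆ τ ∈ sigmaSet q, V1symτ q τ

/-- `V_{2} = ⊕_τ V_{2}^τ`. -/
def V2sym (q : ℕ) : Submodule ℂ (BMat q) := ⨆ τ ∈ sigmaSet q, V2symτ q τ

/-- The defining property of the map `Θ` on `V_[A]`. -/
def ThetaProp (q : ℕ) (Θ : BMat q →ₗ[ℂ] BMat q) : Prop :=
  ∀ τ ∈ sigmaSet q, ∀ σ ∈ CSet τ,
    Θ (AVec σ (nprod σ τ)) =
      (∑ᶠ σ' ∈ NSet τ ∩ CSet σ, AVec σ' (Complex.I • nprod σ' τ)) -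
      ∑ᶠ σ' ∈ NSet τ ∩ NSet σ, AVec σ' (Complex.I • nprod σ' τ)

/-- `V` = span of off-diagonal products `σ⊗σ̂`, `σ ≠ σ̂`. -/
def Voff (q : ℕ) : Submodule ℂ (BMat q) :=
  Submodule.span ℂ {M | ∃ σ ∈ sigmaSet q, ∃ σ' ∈ sigmaSet q, σ ≠ σ' ∧ M = σ ⊗ₖ σ'}

/-- `V^τ` = span of the `σ⊗σ̂` with `σ·σ̂ ∈ {τ, −τ, iτ, −iτ}`. -/
def Vtau (q : ℕ) (τ : Mat q) : Submodule ℂ (BMat q) :=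
  Submodule.span ℂ {M | ∃ σ ∈ sigmaSet q, ∃ σ' ∈ sigmaSet q,
    (nprod σ σ' = τ ∨ nprod σ σ' = -τ ∨ nprod σ σ' = Complex.I • τ ∨
      nprod σ σ' = -(Complex.I • τ)) ∧ M = σ ⊗ₖ σ'}


/-! ### Helper lemmas -/

/-- General `q`-fold Kronecker product. -/
def kr {q : ℕ} (f : Fin q → Matrix (Fin 2) (Fin 2) ℂ) : Mat q :=
  Matrix.of fun x y => ∏ i, f i (x i) (y i)

lemma PauliOp_eq {q : ℕ} (a : Fin q → Fin 4) : PauliOp a = kr (fun i => pauli1 (a i)) := rfl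

lemma kr_mul {q : ℕ} (f g : Fin q → Matrix (Fin 2) (Fin 2) ℂ) :
    kr f * kr g = kr (fun i => f i * g i) := by
  ext x y
  simp only [kr, Matrix.mul_apply, Matrix.of_apply]
  rw [Finset.prod_univ_sum]
  simp [Finset.prod_mul_distrib, Fintype.piFinset_univ]

lemma kr_trace {q : ℕ} (f : Fin q → Matrix (Fin 2) (Fin 2) ℂ) :
    (kr f).trace = ∏ i, (f i).trace := by
  simp only [kr, Matrix.trace, Matrix.diag, Matrix.of_apply]
  rw [Finset.prod_univ_sum]
  simp [Fintype.piFinset_univ]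

lemma kr_smul {q : ℕ} (c : Fin q → ℂ) (f : Fin q → Matrix (Fin 2) (Fin 2) ℂ) :
    kr (fun i => c i • f i) = (∏ i, c i) • kr f := by
  ext x y
  simp [kr, Finset.prod_mul_distrib]

lemma kr_one {q : ℕ} : kr (fun _ : Fin q => (1 : Matrix (Fin 2) (Fin 2) ℂ)) = 1 := by
  ext x y
  simp only [kr, Matrix.of_apply, Matrix.one_apply]
  rw [Finset.prod_ite_zero]
  simp [funext_iff]

lemma pauli1_herm (a : Fin 4) : (pauli1 a)ᴴ = pauli1 a := by
  fin_cases a <;> ext i j <;> fin_cases i <;> fin_cases j <;> simp [pauli1]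

lemma pauli1_sq (a : Fin 4) : pauli1 a * pauli1 a = 1 := by
  fin_cases a <;> ext i j <;> fin_cases i <;> fin_cases j <;>
    simp [pauli1, Matrix.mul_apply, Fin.sum_univ_two]

lemma pauli1_tr (a b : Fin 4) : (pauli1 a * pauli1 b).trace = if a = b then 2 else 0 := by
  fin_cases a <;> fin_cases b <;>
    simp [pauli1, Matrix.mul_apply, Fin.sum_univ_two, Matrix.trace] <;> norm_num

/-- Label of the product, single qubit. -/
def xr1 (a b : Fin 4) : Fin 4 := a ^^^ b

/-- Sign of commutation. -/
def sg (a b : Fin 4) : ℂ := if a = 0 ∨ b = 0 ∨ a = b then 1 else -1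

/-- Phase of the product. -/
def ph1 : Fin 4 → Fin 4 → ℂ :=
  ![![1, 1, 1, 1], ![1, 1, Complex.I, -Complex.I], ![1, -Complex.I, 1, Complex.I],
    ![1, Complex.I, -Complex.I, 1]]

lemma pauli1_mul (a b : Fin 4) : pauli1 a * pauli1 b = ph1 a b • pauli1 (xr1 a b) := by
  fin_cases a <;> fin_cases b <;> ext i j <;> fin_cases i <;> fin_cases j <;>
    simp [pauli1, Matrix.mul_apply, Fin.sum_univ_two, xr1, ph1]

lemma pauli1_comm (a b : Fin 4) :
    pauli1 a * pauli1 b = sg a b • (pauli1 b * pauli1 a) := by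
  fin_cases a <;> fin_cases b <;> ext i j <;> fin_cases i <;> fin_cases j <;>
    simp [pauli1, Matrix.mul_apply, Fin.sum_univ_two, sg]

/-- Label of the product. -/
def xr {q : ℕ} (a b : Fin q → Fin 4) : Fin q → Fin 4 := fun i => xr1 (a i) (b i)

lemma xr1_xr1 : ∀ a b : Fin 4, xr1 (xr1 a b) b = a := by unfold xr1; decide
lemma xr1_zero : ∀ a b : Fin 4, xr1 a b = 0 → a = b := by unfold xr1; decide
lemma xr1_self : ∀ a b : Fin 4, xr1 a b = b → a = 0 := by unfold xr1; decide

lemma xr_xr {q : ℕ} (a b : Fin q → Fin 4) : xr (xr a b) b = a :=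
  funext fun i => xr1_xr1 _ _
lemma xr_zero {q : ℕ} (a b : Fin q → Fin 4) (h : xr a b = 0) : a = b :=
  funext fun i => xr1_zero _ _ (congrFun h i)
lemma xr_self {q : ℕ} (a b : Fin q → Fin 4) (h : xr a b = b) : a = 0 :=
  funext fun i => xr1_self _ _ (congrFun h i)

section helpers

variable {q : ℕ}

lemma P_mul (a b : Fin q → Fin 4) : ∃ c : ℂ, PauliOp a * PauliOp b = c • PauliOp (xr a b) := by
  refine ⟨∏ i, ph1 (a i) (b i), ?_⟩
  simp only [PauliOp_eq, kr_mul, pauli1_mul, kr_smul, xr]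

lemma P_sq (a : Fin q → Fin 4) : PauliOp a * PauliOp a = 1 := by
  simp only [PauliOp_eq, kr_mul, pauli1_sq, kr_one]

lemma P_herm (a : Fin q → Fin 4) : (PauliOp a)ᴴ = PauliOp a := by
  ext x y
  simp only [PauliOp, Matrix.conjTranspose_apply, Matrix.of_apply, star_prod]
  refine Finset.prod_congr rfl fun i _ => ?_
  exact congrFun (congrFun (pauli1_herm (a i)) (x i)) (y i)

lemma P_zero : PauliOp (0 : Fin q → Fin 4) = 1 := by
  rw [PauliOp_eq, ← kr_one]; rfl

lemma P_tr (a b : Fin q → Fin 4) :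
    (PauliOp a * PauliOp b).trace = if a = b then (2 : ℂ) ^ q else 0 := by
  simp only [PauliOp_eq, kr_mul, kr_trace, pauli1_tr]
  rw [Finset.prod_ite_zero]
  simp [funext_iff]

lemma P_comm (a b : Fin q → Fin 4) :
    PauliOp a * PauliOp b = (∏ i, sg (a i) (b i)) • (PauliOp b * PauliOp a) := by
  simp only [PauliOp_eq, kr_mul]
  rw [← kr_smul]
  congr 1
  funext i
  exact pauli1_comm _ _

lemma P_inj : Function.Injective (PauliOp : (Fin q → Fin 4) → Mat q) := by
  intro a b h
  by_contra hne
  have h1 := P_tr a b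
  rw [if_neg hne, ← h, P_tr, if_pos rfl] at h1
  exact pow_ne_zero q two_ne_zero h1

lemma key (a t : Fin q → Fin 4) (ε : ℂ) (hε : ε * ε = 1)
    (h : PauliOp a * PauliOp t = ε • (PauliOp t * PauliOp a)) :
    PauliOp (xr a t) * PauliOp t = ε • (PauliOp t * PauliOp (xr a t)) ∧
    PauliOp (xr a t) ⊗ₖ (PauliOp (xr a t) * PauliOp t) =
      ε • ((PauliOp a * PauliOp t) ⊗ₖ PauliOp a) := by
  obtain ⟨c, hc⟩ := P_mul a t
  have h' : PauliOp t * PauliOp a = ε • (PauliOp a * PauliOp t) := by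
    rw [h, smul_smul, hε, one_smul]
  have hat : PauliOp a * PauliOp t * PauliOp t = PauliOp a := by
    rw [Matrix.mul_assoc, P_sq, Matrix.mul_one]
  have hsq : (PauliOp a * PauliOp t) * (PauliOp a * PauliOp t) = ε • (1 : Mat q) := by
    calc _ = PauliOp a * (PauliOp t * PauliOp a) * PauliOp t := by simp only [Matrix.mul_assoc]
      _ = ε • ((PauliOp a * PauliOp a) * (PauliOp t * PauliOp t)) := by
        rw [h']; simp only [Matrix.mul_smul, Matrix.smul_mul, Matrix.mul_assoc]
      _ = _ := by rw [P_sq, P_sq, Matrix.mul_one]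
  have hcc : c * c = ε := by
    rw [hc, Matrix.mul_smul, Matrix.smul_mul, P_sq, smul_smul] at hsq
    have := congrFun (congrFun hsq 0) 0
    simpa using this
  have hε0 : ε ≠ 0 := fun h0 => by simp [h0] at hε
  have hc0 : c ≠ 0 := fun h0 => hε0 (by rw [← hcc, h0, mul_zero])
  have hQ : PauliOp (xr a t) = c⁻¹ • (PauliOp a * PauliOp t) := by
    rw [hc, smul_smul, inv_mul_cancel₀ hc0, one_smul]
  constructor
  · rw [hQ, Matrix.smul_mul, Matrix.mul_smul, ← Matrix.mul_assoc, h', Matrix.smul_mul,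
      smul_comm ε, smul_smul ε, hε, one_smul]
  · rw [hQ, Matrix.smul_mul, hat, Matrix.smul_kronecker, Matrix.kronecker_smul, smul_smul]
    congr 1
    rw [← mul_inv, hcc]
    exact inv_eq_of_mul_eq_one_left hε

lemma sum_swap (t : Fin q → Fin 4) (ε : ℂ) (hε : ε * ε = 1) (F : Finset (Fin q → Fin 4))
    (hF : ∀ a ∈ F, xr a t ∈ F)
    (h : ∀ a ∈ F, PauliOp a * PauliOp t = ε • (PauliOp t * PauliOp a)) :
    ∑ a ∈ F, (PauliOp a * PauliOp t) ⊗ₖ PauliOp a =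
      ε • ∑ a ∈ F, PauliOp a ⊗ₖ (PauliOp a * PauliOp t) := by
  have : ∑ a ∈ F, PauliOp a ⊗ₖ (PauliOp a * PauliOp t) =
      ∑ a ∈ F, ε • ((PauliOp a * PauliOp t) ⊗ₖ PauliOp a) := by
    symm
    refine Finset.sum_bij (fun a _ => xr a t) hF ?_ ?_ ?_
    · intro a _ b _ hab
      simpa [xr_xr] using congrArg (fun z => xr z t) hab
    · intro b hb
      exact ⟨xr b t, hF b hb, xr_xr b t⟩
    · intro a ha
      exact ((key a t ε hε (h a ha)).2).symm
  rw [this, ← Finset.smul_sum, smul_smul, hε, one_smul]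

/-- The unnormalized adjoint vector. -/
def w (F : Finset (Fin q → Fin 4)) (t : Fin q → Fin 4) : BMat q :=
  ∑ a ∈ F, PauliOp a ⊗ₖ (PauliOp a * PauliOp t)

lemma hs_basic (a b t u : Fin q → Fin 4) :
    hs (PauliOp a ⊗ₖ (PauliOp a * PauliOp t)) (PauliOp b ⊗ₖ (PauliOp b * PauliOp u)) =
      if a = b then (if t = u then (2 : ℂ) ^ q * 2 ^ q else 0) else 0 := by
  unfold hs
  rw [Matrix.conjTranspose_kronecker, ← Matrix.mul_kronecker_mul, Matrix.trace_kronecker,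
    Matrix.conjTranspose_mul, P_herm, P_herm, P_tr]
  by_cases hab : a = b
  · subst hab
    have : PauliOp t * PauliOp a * (PauliOp a * PauliOp u) = PauliOp t * PauliOp u := by
      rw [Matrix.mul_assoc, ← Matrix.mul_assoc (PauliOp a), P_sq, Matrix.one_mul]
    rw [this, P_tr]
    by_cases htu : t = u <;> simp [htu]
  · simp [hab]

lemma hs_smul (c e : ℂ) (A B : BMat q) : hs (c • A) (e • B) = star c * e * hs A B := by
  simp [hs, Matrix.conjTranspose_smul, Matrix.trace_smul, mul_assoc]
  ring

lemma hs_sum_left {ι : Type*} (s : Finset ι) (f : ι → BMat q) (B : BMat q) :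
    hs (∑ i ∈ s, f i) B = ∑ i ∈ s, hs (f i) B := by
  simp [hs, Matrix.conjTranspose_sum, Finset.sum_mul, Matrix.trace_sum]

lemma hs_sum_right {ι : Type*} (s : Finset ι) (f : ι → BMat q) (B : BMat q) :
    hs B (∑ i ∈ s, f i) = ∑ i ∈ s, hs B (f i) := by
  simp [hs, Finset.mul_sum, Matrix.trace_sum]

lemma hs_w_ne (F G : Finset (Fin q → Fin 4)) (t u : Fin q → Fin 4) (h : t ≠ u) :
    hs (w F t) (w G u) = 0 := by
  simp [w, hs_sum_left, hs_sum_right, hs_basic, h]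

lemma hs_w_self (F : Finset (Fin q → Fin 4)) (t : Fin q → Fin 4) :
    hs (w F t) (w F t) = F.card * ((2 : ℂ) ^ q * 2 ^ q) := by
  simp [w, hs_sum_left, hs_sum_right, hs_basic]

/-- normalized Pauli with given label -/
def nP (a : Fin q → Fin 4) : Mat q := (sqrtd q)⁻¹ • PauliOp a

lemma sqrtd_sq : sqrtd q * sqrtd q = 2 ^ q := by
  unfold sqrtd
  rw [← Complex.ofReal_mul, Real.mul_self_sqrt (by positivity)]
  push_cast; rfl

lemma sqrtd_ne : sqrtd q ≠ 0 := fun h => by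
  have := sqrtd_sq (q := q)
  rw [h, mul_zero] at this
  exact pow_ne_zero q two_ne_zero this.symm

lemma star_sqrtd : star (sqrtd q) = sqrtd q := by
  unfold sqrtd; exact Complex.conj_ofReal _

lemma nP_inj : Function.Injective (nP : (Fin q → Fin 4) → Mat q) := by
  intro a b h
  exact P_inj (smul_right_injective _ (inv_ne_zero sqrtd_ne) h)

lemma mem_sigma (M : Mat q) : M ∈ sigmaSet q ↔ ∃ a, a ≠ 0 ∧ M = nP a := by
  have h0 : sigma0 q = nP 0 := by rw [sigma0, nP, P_zero]
  constructor
  · rintro ⟨⟨a, rfl⟩, h⟩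
    refine ⟨a, ?_, rfl⟩
    rintro rfl
    exact h h0.symm
  · rintro ⟨a, ha, rfl⟩
    refine ⟨⟨a, rfl⟩, ?_⟩
    intro h
    rw [Set.mem_singleton_iff, h0] at h
    exact ha (nP_inj h)

open Classical in
/-- labels of `C_τ` -/
def CL (t : Fin q → Fin 4) : Finset (Fin q → Fin 4) :=
  Finset.univ.filter fun a => a ≠ 0 ∧ a ≠ t ∧ PauliOp a * PauliOp t = PauliOp t * PauliOp a

open Classical in
/-- labels of `N_τ` -/
def NL (t : Fin q → Fin 4) : Finset (Fin q → Fin 4) :=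
  Finset.univ.filter fun a => a ≠ 0 ∧ PauliOp a * PauliOp t + PauliOp t * PauliOp a = 0

lemma nP_mul (a t : Fin q → Fin 4) :
    nP a * nP t = ((sqrtd q)⁻¹ * (sqrtd q)⁻¹) • (PauliOp a * PauliOp t) := by
  simp [nP, smul_smul]

lemma ss_ne : (sqrtd q)⁻¹ * (sqrtd q)⁻¹ ≠ 0 :=
  mul_ne_zero (inv_ne_zero sqrtd_ne) (inv_ne_zero sqrtd_ne)

lemma CSet_eq (t : Fin q → Fin 4) : CSet (nP t) = nP '' (CL t : Set (Fin q → Fin 4)) := by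
  ext M
  simp only [CSet, Set.mem_setOf_eq, Set.mem_image, CL, Finset.coe_filter, Finset.mem_univ,
    true_and, mem_sigma]
  constructor
  · rintro ⟨⟨a, ha, rfl⟩, hne, hc⟩
    refine ⟨a, ⟨ha, fun h => hne (by rw [h]), ?_⟩, rfl⟩
    rw [nP_mul, nP_mul] at hc
    exact smul_right_injective _ ss_ne hc
  · rintro ⟨a, ⟨ha, hne, hc⟩, rfl⟩
    exact ⟨⟨a, ha, rfl⟩, fun h => hne (nP_inj h), by rw [nP_mul, nP_mul, hc]⟩

lemma NSet_eq (t : Fin q → Fin 4) : NSet (nP t) = nP '' (NL t : Set (Fin q → Fin 4)) := by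
  ext M
  simp only [NSet, Set.mem_setOf_eq, Set.mem_image, NL, Finset.coe_filter, Finset.mem_univ,
    true_and, mem_sigma]
  constructor
  · rintro ⟨⟨a, ha, rfl⟩, hc⟩
    refine ⟨a, ⟨ha, ?_⟩, rfl⟩
    rw [nP_mul, nP_mul, ← smul_add] at hc
    exact (smul_eq_zero.mp hc).resolve_left ss_ne
  · rintro ⟨a, ⟨ha, hc⟩, rfl⟩
    exact ⟨⟨a, ha, rfl⟩, by rw [nP_mul, nP_mul, ← smul_add, hc, smul_zero]⟩

lemma nprod_nP (a t : Fin q → Fin 4) :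
    nprod (nP a) (nP t) = (sqrtd q)⁻¹ • (PauliOp a * PauliOp t) := by
  rw [nprod, nP_mul, smul_smul, ← mul_assoc, mul_inv_cancel₀ sqrtd_ne, one_mul]

lemma C_comm (t : Fin q → Fin 4) (a) (ha : a ∈ CL t) :
    PauliOp a * PauliOp t = (1 : ℂ) • (PauliOp t * PauliOp a) := by
  simp only [CL, Finset.mem_filter] at ha
  rw [one_smul, ha.2.2.2]

lemma N_comm (t : Fin q → Fin 4) (a) (ha : a ∈ NL t) :
    PauliOp a * PauliOp t = (-1 : ℂ) • (PauliOp t * PauliOp a) := by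
  simp only [NL, Finset.mem_filter] at ha
  rw [neg_one_smul]
  exact eq_neg_of_add_eq_zero_left ha.2.2

lemma C_closed (t : Fin q → Fin 4) (a) (ha : a ∈ CL t) : xr a t ∈ CL t := by
  have h := (key a t 1 (by norm_num) (C_comm t a ha)).1
  simp only [CL, Finset.mem_filter] at ha ⊢
  refine ⟨Finset.mem_univ _, fun h0 => ha.2.2.1 (xr_zero _ _ h0),
    fun h0 => ha.2.1 (xr_self _ _ h0), by rw [h, one_smul]⟩

lemma N_closed (t : Fin q → Fin 4) (a) (ha : a ∈ NL t) : xr a t ∈ NL t := by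
  have h := (key a t (-1) (by norm_num) (N_comm t a ha)).1
  simp only [NL, Finset.mem_filter] at ha ⊢
  refine ⟨Finset.mem_univ _, fun h0 => ?_, by rw [h, neg_one_smul, neg_add_cancel]⟩
  have h1 := ha.2.2
  rw [xr_zero _ _ h0, P_sq] at h1
  have := congrFun (congrFun h1 0) 0
  norm_num at this

/-- normalization constant -/
def kc (q n : ℕ) : ℂ :=
  ((Real.sqrt (2 * (n : ℝ)) : ℂ))⁻¹ * ((Real.sqrt 2 : ℂ))⁻¹ * ((sqrtd q)⁻¹ * (sqrtd q)⁻¹) * 2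

lemma vadjS_eq (t : Fin q → Fin 4) : vadjS (nP t) = kc q (CL t).card • w (CL t) t := by
  have h := sum_swap t 1 (by norm_num) (CL t) (C_closed t) (C_comm t)
  rw [vadjS, CSet_eq, finsum_mem_image nP_inj.injOn, finsum_mem_coe_finset,
    Set.ncard_image_of_injective _ nP_inj, Set.ncard_coe_finset]
  have : ∀ a ∈ CL t, SVec (nP a) (nprod (nP a) (nP t)) =
      (((Real.sqrt 2 : ℂ))⁻¹ * ((sqrtd q)⁻¹ * (sqrtd q)⁻¹)) •
        (PauliOp a ⊗ₖ (PauliOp a * PauliOp t) + (PauliOp a * PauliOp t) ⊗ₖ PauliOp a) := by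
    intro a _
    rw [nprod_nP, SVec, nP]
    simp only [Matrix.smul_kronecker, Matrix.kronecker_smul, smul_smul, smul_add, mul_assoc]
  rw [Finset.sum_congr rfl this, ← Finset.smul_sum, Finset.sum_add_distrib, h, one_smul,
    ← two_smul ℂ, smul_smul, smul_smul, w, kc]
  congr 1
  ring

lemma vadjA_eq (t : Fin q → Fin 4) :
    vadjA (nP t) = (Complex.I * kc q (NL t).card) • w (NL t) t := by
  have h := sum_swap t (-1) (by norm_num) (NL t) (N_closed t) (N_comm t)
  rw [vadjA, NSet_eq, finsum_mem_image nP_inj.injOn, finsum_mem_coe_finset,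
    Set.ncard_image_of_injective _ nP_inj, Set.ncard_coe_finset]
  have : ∀ a ∈ NL t, AVec (nP a) (Complex.I • nprod (nP a) (nP t)) =
      (((Real.sqrt 2 : ℂ))⁻¹ * (Complex.I * ((sqrtd q)⁻¹ * (sqrtd q)⁻¹))) •
        (PauliOp a ⊗ₖ (PauliOp a * PauliOp t) - (PauliOp a * PauliOp t) ⊗ₖ PauliOp a) := by
    intro a _
    rw [nprod_nP, AVec, nP]
    simp only [Matrix.smul_kronecker, Matrix.kronecker_smul, smul_smul, smul_sub]
    congr 2 <;> ring
  rw [Finset.sum_congr rfl this, ← Finset.smul_sum, Finset.sum_sub_distrib, h, neg_one_smul,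
    sub_neg_eq_add, ← two_smul ℂ, smul_smul, smul_smul, w, kc]
  congr 1
  ring

lemma star_kc (n : ℕ) : star (kc q n) = kc q n := by
  simp only [kc, star_mul', star_inv₀, star_sqrtd]
  simp [Complex.conj_ofReal]

lemma kc_sq (n : ℕ) (hn : n ≠ 0) : kc q n * kc q n * (n * ((2 : ℂ) ^ q * 2 ^ q)) = 1 := by
  have h1 : ((Real.sqrt (2 * (n : ℝ)) : ℝ) : ℂ) * ((Real.sqrt (2 * (n : ℝ)) : ℝ) : ℂ) = 2 * n := by
    rw [← Complex.ofReal_mul, Real.mul_self_sqrt (by positivity)]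
    push_cast; rfl
  have h2 : ((Real.sqrt 2 : ℝ) : ℂ) * ((Real.sqrt 2 : ℝ) : ℂ) = 2 := by
    rw [← Complex.ofReal_mul, Real.mul_self_sqrt (by positivity)]
    push_cast; rfl
  have h3 := sqrtd_sq (q := q)
  have hn' : (n : ℂ) ≠ 0 := by exact_mod_cast hn
  have h4 : (2 : ℂ) ^ q ≠ 0 := pow_ne_zero q two_ne_zero
  have : kc q n * kc q n = (((Real.sqrt (2 * (n : ℝ)) : ℝ) : ℂ) * ((Real.sqrt (2 * (n : ℝ)) : ℝ) : ℂ))⁻¹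
      * (((Real.sqrt 2 : ℝ) : ℂ) * ((Real.sqrt 2 : ℝ) : ℂ))⁻¹ *
      ((sqrtd q * sqrtd q)⁻¹ * (sqrtd q * sqrtd q)⁻¹) * 4 := by
    simp only [kc, mul_inv]; ring
  rw [this, h1, h2, h3]
  field_simp
  norm_num

lemma CL_ne (hq : 2 ≤ q) (t : Fin q → Fin 4) (ht : t ≠ 0) : (CL t).card ≠ 0 := by
  obtain ⟨i, hi⟩ := Function.ne_iff.mp ht
  have main : ∀ a : Fin q → Fin 4, a ≠ 0 → a ≠ t → (∀ j, sg (a j) (t j) = 1) →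
      (CL t).card ≠ 0 := by
    intro a h0 h1 h2
    refine Finset.card_ne_zero_of_mem (a := a) ?_
    simp only [CL, Finset.mem_filter]
    refine ⟨Finset.mem_univ _, h0, h1, ?_⟩
    rw [P_comm, Finset.prod_eq_one (fun j _ => h2 j), one_smul]
  have hs0 : (Pi.single i (t i) : Fin q → Fin 4) ≠ 0 := by
    simpa using hi
  by_cases h : (Pi.single i (t i) : Fin q → Fin 4) = t
  · have : Nontrivial (Fin q) := Fin.nontrivial_iff_two_le.mpr hq
    obtain ⟨j, hj⟩ := exists_ne i
    have htj : t j = 0 := by rw [← h]; simp [hj]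
    refine main (Pi.single j 1) (by simp) ?_ ?_
    · intro h'
      have := congrFun h' j
      rw [htj] at this
      simp at this
    · intro k
      by_cases hk : k = j
      · subst hk; simp [sg, htj]
      · simp [sg, hk]
  · refine main _ hs0 h ?_
    intro k
    by_cases hk : k = i
    · subst hk; simp [sg]
    · simp [sg, hk]

lemma exists_anti : ∀ x : Fin 4, x ≠ 0 → ∃ y : Fin 4, y ≠ 0 ∧ y ≠ x := by decide

lemma NL_ne (t : Fin q → Fin 4) (ht : t ≠ 0) : (NL t).card ≠ 0 := by
  obtain ⟨i, hi⟩ := Function.ne_iff.mp ht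
  obtain ⟨y, hy, hyx⟩ := exists_anti (t i) hi
  refine Finset.card_ne_zero_of_mem (a := Pi.single i y) ?_
  simp only [NL, Finset.mem_filter]
  refine ⟨Finset.mem_univ _, by simpa using hy, ?_⟩
  rw [P_comm, Finset.prod_eq_single i]
  · have : sg ((Pi.single i y : Fin q → Fin 4) i) (t i) = -1 := by
      have hi' : t i ≠ 0 := hi
      simp [sg, hy, hyx, hi']
    rw [this, neg_one_smul, neg_add_cancel]
  · intro k _ hk
    simp [sg, hk]
  · simp

lemma S_self (hq : 2 ≤ q) (t : Fin q → Fin 4) (ht : t ≠ 0) :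
    hs (vadjS (nP t)) (vadjS (nP t)) = 1 := by
  rw [vadjS_eq, hs_smul, hs_w_self, star_kc, kc_sq _ (CL_ne hq t ht)]

lemma A_self (t : Fin q → Fin 4) (ht : t ≠ 0) :
    hs (vadjA (nP t)) (vadjA (nP t)) = 1 := by
  rw [vadjA_eq, hs_smul, hs_w_self, star_mul', star_kc]
  have h := kc_sq (q := q) _ (NL_ne t ht)
  have hI : star Complex.I = -Complex.I := Complex.conj_I
  rw [hI]
  linear_combination h - (kc q (NL t).card * kc q (NL t).card *
    ((NL t).card * ((2 : ℂ) ^ q * 2 ^ q))) * Complex.I_mul_I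

lemma S_ne (t u : Fin q → Fin 4) (h : t ≠ u) : hs (vadjS (nP t)) (vadjS (nP u)) = 0 := by
  rw [vadjS_eq, vadjS_eq, hs_smul, hs_w_ne _ _ _ _ h, mul_zero]

lemma A_ne (t u : Fin q → Fin 4) (h : t ≠ u) : hs (vadjA (nP t)) (vadjA (nP u)) = 0 := by
  rw [vadjA_eq, vadjA_eq, hs_smul, hs_w_ne _ _ _ _ h, mul_zero]

lemma finrank_aux (v : Mat q → BMat q)
    (h1 : ∀ t : Fin q → Fin 4, t ≠ 0 → hs (v (nP t)) (v (nP t)) = 1)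
    (h2 : ∀ t u : Fin q → Fin 4, t ≠ u → hs (v (nP t)) (v (nP u)) = 0) :
    Module.finrank ℂ (Submodule.span ℂ {M | ∃ τ ∈ sigmaSet q, M = v τ}) = 2 ^ (2 * q) - 1 := by
  let f : {a : Fin q → Fin 4 // a ≠ 0} → BMat q := fun a => v (nP a.1)
  have hset : {M | ∃ τ ∈ sigmaSet q, M = v τ} = Set.range f := by
    ext M
    simp only [Set.mem_setOf_eq, Set.mem_range, mem_sigma]
    constructor
    · rintro ⟨τ, ⟨a, ha, rfl⟩, rfl⟩
      exact ⟨⟨a, ha⟩, rfl⟩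
    · rintro ⟨⟨a, ha⟩, rfl⟩
      exact ⟨nP a, ⟨a, ha, rfl⟩, rfl⟩
  have hli : LinearIndependent ℂ f := by
    rw [Fintype.linearIndependent_iff]
    intro g hg i
    have h := congrArg (hs (f i)) hg
    rw [hs_sum_right, Finset.sum_eq_single i] at h
    · have h3 := hs_smul 1 (g i) (f i) (f i)
      rw [one_smul] at h3
      rw [h3, h1 i.1 i.2] at h
      simpa [hs] using h
    · intro j _ hj
      have h3 := hs_smul 1 (g j) (f i) (f j)
      rw [one_smul] at h3
      rw [h3, h2 i.1 j.1 (fun h => hj (Subtype.ext h.symm)), mul_zero]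
    · simp
  rw [hset, finrank_span_eq_card hli, Fintype.card_subtype_compl, Fintype.card_subtype_eq]
  simp [pow_mul]

end helpers

/-- orthonormality of the adjoint vectors `v^[adj]_τ` and `v^{adj}_τ`,
and the dimensions `dim V_[adj] = dim V_{adj} = d² − 1`. -/
theorem statement5 (q : ℕ) (hq : 2 ≤ q) :
    (∀ τ ∈ sigmaSet q, ∀ τ' ∈ sigmaSet q,
      (τ = τ' → hs (vadjS τ) (vadjS τ') = 1 ∧ hs (vadjA τ) (vadjA τ') = 1) ∧
      (τ ≠ τ' → hs (vadjS τ) (vadjS τ') = 0 ∧ hs (vadjA τ) (vadjA τ') = 0)) ∧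
    Module.finrank ℂ ↥(VadjS q) = 2 ^ (2 * q) - 1 ∧
    Module.finrank ℂ ↥(VadjA q) = 2 ^ (2 * q) - 1 := by
  refine ⟨?_, finrank_aux vadjS (S_self hq) S_ne, finrank_aux vadjA A_self A_ne⟩
  intro τ hτ τ' hτ'
  obtain ⟨t, ht, rfl⟩ := (mem_sigma τ).mp hτ
  obtain ⟨u, hu, rfl⟩ := (mem_sigma τ').mp hτ'
  constructor
  · intro h
    rw [← h]
    exact ⟨S_self hq t ht, A_self t ht⟩
  · intro h
    have htu : t ≠ u := fun h' => h (by rw [h'])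
    exact ⟨S_ne t u htu, A_ne t u htu⟩

end CliffordPaper
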